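/- arXiv:2605.26968 — 3 statements merged into one kernel-verified Lean document; each statement's English description precedes it below -/
import Mathlib

section
/- Let u : (0,∞) × 𝕋 → [0,∞) be such that for every t > 0 the function u(t,·) is continuous with ∫_𝕋 u(t,θ) dθ = 1. Assume that max_{θ ∈ 𝕋} u(t,θ) → 1/(2π) as t → ∞, and that there exist K > 0 and a sequence of times t_n → ∞ with ‖u(t_n,·)‖_{C^{1/3}(𝕋)} ≤ K for all n. Then there exists a time t > 0 such that min_{θ ∈ 𝕋} u(t,θ) > 0. -/
open MeasureTheory Filter Real

instance : Fact ((0 : ℝ) < 2 * π) := ⟨by positivity⟩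

/-- Let `u : (0,∞) × 𝕋 → [0,∞)` be such that `u(t,·)` is a continuous probability
density for every `t > 0`. If `max_θ u(t,θ) → 1/(2π)` as `t → ∞` and there are `K > 0`
and times `tₙ → ∞` along which `‖u(tₙ,·)‖_{C^{1/3}(𝕋)} ≤ K`, then there is a time
`t > 0` at which `min_θ u(t,θ) > 0`. Here `𝕋 = ℝ/2πℤ` carries its geodesic distance. -/
theorem exists_time_min_pos (u : ℝ → AddCircle (2 * π) → ℝ)
    (hnn : ∀ t, 0 < t → ∀ θ, 0 ≤ u t θ)
    (hcont : ∀ t, 0 < t → Continuous (u t))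
    (hmass : ∀ t, 0 < t → ∫ θ, u t θ = 1)
    (hmax : Tendsto (fun t => ⨆ θ, u t θ) atTop (nhds (1 / (2 * π))))
    (K : ℝ) (hK : 0 < K) (tseq : ℕ → ℝ) (htseq : Tendsto tseq atTop atTop)
    (hholder : ∀ n, ∀ x y : AddCircle (2 * π),
      |u (tseq n) x - u (tseq n) y| ≤ K * dist x y ^ ((1 : ℝ) / 3)) :
    ∃ t : ℝ, 0 < t ∧ ∀ θ, 0 < u t θ := by
  by_contra hcon
  push Not at hcon
  have hπ := Real.pi_pos
  set c : ℝ := 1 / (4 * π) with hc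
  have hc0 : 0 < c := by positivity
  set r : ℝ := (c / K) ^ (3 : ℕ) with hr
  have hr0 : 0 < r := by positivity
  have hKr : K * r ^ ((1 : ℝ) / 3) = c := by
    have h1 : r ^ ((1 : ℝ) / 3) = c / K := by
      rw [hr, one_div]
      exact_mod_cast Real.pow_rpow_inv_natCast (n := 3) (by positivity : 0 ≤ c / K) (by norm_num)
    rw [h1]; field_simp
  set v : ℝ := min (2 * π) (2 * r) with hv
  have hv0 : 0 < v := by positivity
  have hvol : ∀ x : AddCircle (2 * π), volume.real (Metric.closedBall x r) = v := by
    intro x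
    rw [Measure.real, AddCircle.volume_closedBall, ENNReal.toReal_ofReal hv0.le]
  have huniv : volume.real (Set.univ : Set (AddCircle (2 * π))) = 2 * π := by
    rw [Measure.real, AddCircle.measure_univ, ENNReal.toReal_ofReal (by positivity)]
  have key : ∀ᶠ n in atTop, 1 ≤ v * (c - ⨆ θ, u (tseq n) θ) + 2 * π * (⨆ θ, u (tseq n) θ) := by
    filter_upwards [htseq.eventually_gt_atTop 0] with n hn
    obtain ⟨θ, hθ⟩ := hcon _ hn
    have hθ0 : u (tseq n) θ = 0 := le_antisymm hθ (hnn _ hn θ)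
    set M := ⨆ θ, u (tseq n) θ with hM
    have hle : ∀ x, u (tseq n) x ≤ M := fun x =>
      le_ciSup (isCompact_range (hcont _ hn)).bddAbove x
    have hmeas : MeasurableSet (Metric.closedBall θ r) := Metric.isClosed_closedBall.measurableSet
    have hi1 : Integrable (u (tseq n)) :=
      (hcont _ hn).integrable_of_hasCompactSupport (HasCompactSupport.of_compactSpace _)
    have hi2 : Integrable ((Metric.closedBall θ r).indicator (fun _ => c - M)) volume :=
      (integrable_const _).indicator hmeas
    have hi3 : Integrable (fun _ : AddCircle (2 * π) => M) volume := integrable_const _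
    have hint : ∫ x, u (tseq n) x ≤
        ∫ x, ((Metric.closedBall θ r).indicator (fun _ => c - M) x + M) := by
      refine integral_mono hi1 (hi2.add hi3) fun x => ?_
      by_cases hx : x ∈ Metric.closedBall θ r
      · have h1 := hholder n x θ
        have h2 : K * dist x θ ^ ((1 : ℝ) / 3) ≤ K * r ^ ((1 : ℝ) / 3) := by
          have : dist x θ ≤ r := hx
          gcongr
        have h3 := le_abs_self (u (tseq n) x - u (tseq n) θ)
        simp only [Set.indicator_of_mem hx]
        linarith
      · simp only [Set.indicator_of_notMem hx]
        linarith [hle x]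
    rw [hmass _ hn, integral_add hi2 hi3, integral_indicator hmeas, setIntegral_const,
      integral_const, hvol, huniv] at hint
    simpa [smul_eq_mul] using hint
  have hlim := hmax.comp htseq
  have hlim2 := ((hlim.const_sub c).const_mul v).add (hlim.const_mul (2 * π))
  have hfin := ge_of_tendsto hlim2 key
  have h1 : 2 * π * (1 / (2 * π)) = 1 := by field_simp
  have h2 : c - 1 / (2 * π) = -c := by rw [hc]; field_simp; norm_num
  rw [h1, h2] at hfin
  nlinarith [mul_pos hv0 hc0]
end

section
/- For every K > 0 there exists δ > 0 with the following property: every continuous function u : 𝕋 → [0,∞) with ∫_𝕋 u(θ) dθ = 1, min_{θ ∈ 𝕋} u(θ) = 0 and ‖u‖_{C^{1/3}(𝕋)} ≤ K satisfies max_{θ ∈ 𝕋} u(θ) ≥ 1/(2π) + δ. -/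
open MeasureTheory Filter Real

/-- For every `K > 0` there is `δ > 0` such that every continuous probability density
`u` on the circle `𝕋 = ℝ/2πℤ` with `min u = 0` and `‖u‖_{C^{1/3}(𝕋)} ≤ K` satisfies
`max u ≥ 1/(2π) + δ`. Here `𝕋` carries its geodesic distance. -/
theorem max_lower_bound_of_min_zero (K : ℝ) (hK : 0 < K) :
    ∃ δ : ℝ, 0 < δ ∧ ∀ u : AddCircle (2 * π) → ℝ,
      Continuous u → (∀ θ, 0 ≤ u θ) → (∫ θ, u θ = 1) →
      (∃ θ₀, u θ₀ = 0) →
      (∀ x y : AddCircle (2 * π), |u x - u y| ≤ K * dist x y ^ ((1 : ℝ) / 3)) →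
      ∃ θ, 1 / (2 * π) + δ ≤ u θ := by
  have hc : 0 < 1 / (2 * π) := by positivity
  set c : ℝ := 1 / (2 * π) with hcdef
  have hcp : c * (2 * π) = 1 := by rw [hcdef]; field_simp
  obtain ⟨r, hr, hr1, hrK⟩ : ∃ r : ℝ, 0 < r ∧ r ≤ 1 ∧ K * r ^ ((1 : ℝ) / 3) ≤ c / 2 := by
    refine ⟨min 1 ((c / (2 * K)) ^ (3 : ℝ)), lt_min one_pos (by positivity), min_le_left _ _, ?_⟩
    have h1 : (min 1 ((c / (2 * K)) ^ (3 : ℝ))) ^ ((1 : ℝ) / 3) ≤ c / (2 * K) := by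
      calc _ ≤ ((c / (2 * K)) ^ (3 : ℝ)) ^ ((1 : ℝ) / 3) :=
            Real.rpow_le_rpow (by positivity) (min_le_right _ _) (by norm_num)
        _ = c / (2 * K) := by
            rw [← Real.rpow_mul (by positivity)]; norm_num
    calc _ ≤ K * (c / (2 * K)) := by gcongr
      _ = c / 2 := by field_simp
  have hpi := Real.pi_gt_three
  refine ⟨c * r / (4 * π), by positivity, ?_⟩
  intro u hu _ hint ⟨θ₀, h0⟩ hH
  by_contra! hcon
  set δ : ℝ := c * r / (4 * π) with hδ
  have hδp : 0 < δ := by positivity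
  have hδe : δ * (2 * π) = c * r / 2 := by rw [hδ]; field_simp; ring
  let B : Set (AddCircle (2 * π)) := Metric.closedBall θ₀ r
  have hBm : MeasurableSet B := Metric.isClosed_closedBall.measurableSet
  have hvB : (volume : Measure (AddCircle (2 * π))).real B = 2 * r := by
    rw [Measure.real, AddCircle.volume_closedBall, min_eq_right (by linarith),
      ENNReal.toReal_ofReal (by positivity)]
  have hv : (volume : Measure (AddCircle (2 * π))).real Set.univ = 2 * π := by
    rw [Measure.real, AddCircle.measure_univ, ENNReal.toReal_ofReal (by positivity)]
  have hi : Integrable (B.indicator (fun _ => c / 2)) (volume : Measure (AddCircle (2 * π))) :=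
    (integrable_const _).indicator hBm
  have hui : Integrable u (volume : Measure (AddCircle (2 * π))) :=
    hu.integrable_of_hasCompactSupport (HasCompactSupport.of_compactSpace u)
  have key : ∫ θ, u θ ≤ ∫ θ, ((c + δ) - B.indicator (fun _ => c / 2) θ) := by
    refine integral_mono hui ((integrable_const _).sub hi) ?_
    intro θ
    by_cases h : θ ∈ B
    · have hd : dist θ θ₀ ≤ r := h
      have h2 := hH θ θ₀
      have h3 : K * dist θ θ₀ ^ ((1 : ℝ) / 3) ≤ K * r ^ ((1 : ℝ) / 3) := by gcongr
      have h4 := le_abs_self (u θ - u θ₀)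
      simp only [Set.indicator_of_mem h]
      linarith
    · simp only [Set.indicator_of_notMem h]
      linarith [hcon θ]
  rw [integral_sub (integrable_const _) hi, integral_indicator hBm, hint] at key
  simp only [integral_const, smul_eq_mul, hv, measureReal_restrict_apply_univ, hvB] at key
  nlinarith [mul_pos hc hr]
end

section
/- Let u be a smooth solution of the periodic Dyson equation. Then for every t > 0 one has d/dt ∫_𝕋 u(t,x) log u(t,x) dx + ∫_𝕋 u(t,x) H[∂_x u](t,x) dx = 0. -/
open MeasureTheory Filter Real intervalIntegral

/-- The periodic Hilbert transform of a (2π-periodic) function `f : ℝ → ℝ`: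
`H[f](x) = (1/(2π)) ∫_𝕋 cot((x−y)/2) (f(y) − f(x)) dy`, the circle `𝕋 = ℝ/2πℤ`
being identified with `[0,2π)`. -/
noncomputable def periodicHilbert (f : ℝ → ℝ) (x : ℝ) : ℝ :=
  (1 / (2 * π)) * ∫ y in (0 : ℝ)..(2 * π), Real.cot ((x - y) / 2) * (f y - f x)

/-- A smooth solution of the periodic Dyson equation, described by a `2π`-periodic
(in space) function `u` on `(0,∞) × ℝ`: jointly `C^∞`, strictly positive, of mass one
on the circle at each positive time, and satisfying `∂ₜ u + ∂ₓ (u H[u]) = 0` on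
`(0,∞) × 𝕋`. -/
structure IsPeriodicDysonSolution (u : ℝ → ℝ → ℝ) : Prop where
  periodic : ∀ t x, u t (x + 2 * π) = u t x
  smooth : ContDiffOn ℝ (⊤ : ℕ∞) (fun p : ℝ × ℝ => u p.1 p.2) (Set.Ioi 0 ×ˢ Set.univ)
  pos : ∀ t, 0 < t → ∀ x, 0 < u t x
  mass : ∀ t, 0 < t → ∫ x in (0 : ℝ)..(2 * π), u t x = 1
  pde : ∀ t, 0 < t → ∀ x,
    deriv (fun s => u s x) t + deriv (fun y => u t y * periodicHilbert (u t) y) x = 0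

lemma pd_cot_periodic (x : ℝ) : Real.cot (x - π) = Real.cot x := by
  rw [Real.cot_eq_cos_div_sin, Real.cot_eq_cos_div_sin, Real.cos_sub_pi, Real.sin_sub_pi, neg_div_neg_eq]

lemma pd_hilbert_eq (f : ℝ → ℝ) (hf : Function.Periodic f (2 * π)) (x : ℝ) :
    periodicHilbert f x =
      (1 / (2 * π)) * ∫ z in (-π)..π, Real.cot (z / 2) * (f (x - z) - f x) := by
  unfold periodicHilbert
  congr 1
  have hg : Function.Periodic (fun y => Real.cot ((x - y) / 2) * (f y - f x)) (2 * π) := by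
    intro y
    have h1 : (x - (y + 2 * π)) / 2 = (x - y) / 2 - π := by ring
    simp only [h1, pd_cot_periodic, hf y]
  have h2 := hg.intervalIntegral_add_eq 0 (x - π)
  have h3 := intervalIntegral.integral_comp_sub_left
    (fun y => Real.cot ((x - y) / 2) * (f y - f x)) x (a := -π) (b := π)
  simp only [sub_sub_cancel] at h3
  rw [h3]
  rw [zero_add] at h2
  rw [h2]
  congr 1
  ring

lemma pd_hilbert_periodic (f : ℝ → ℝ) (hf : Function.Periodic f (2 * π)) :
    Function.Periodic (periodicHilbert f) (2 * π) := by
  intro x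
  rw [pd_hilbert_eq f hf, pd_hilbert_eq f hf]
  have h : ∀ z, f (x + 2 * π - z) = f (x - z) := by
    intro z
    rw [← hf (x - z)]; congr 1; ring
  simp only [h, hf x]

lemma pd_deriv_periodic (f : ℝ → ℝ) (hf : Function.Periodic f (2 * π)) :
    Function.Periodic (deriv f) (2 * π) := by
  intro x
  rw [← deriv_comp_add_const]
  congr 1
  funext y
  exact hf y

lemma pd_cot_bound (z : ℝ) (hz : |z| ≤ π) : |Real.cot (z / 2)| * |z| ≤ π := by
  rcases eq_or_ne z 0 with rfl | h0
  · simp [Real.pi_pos.le]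
  have hz0 : 0 < |z| := abs_pos.mpr h0
  have h1 : 2 / π * (|z| / 2) ≤ Real.sin (|z| / 2) :=
    Real.mul_le_sin (by positivity) (by linarith)
  have h2 : |Real.sin (z / 2)| = Real.sin (|z| / 2) := by
    have h3 : 0 ≤ Real.sin (|z| / 2) := le_trans (by positivity) h1
    rw [← abs_of_nonneg h3]
    rcases abs_cases z with ⟨h, _⟩ | ⟨h, _⟩
    · rw [h]
    · rw [h, neg_div, Real.sin_neg, abs_neg]
  have h4 : 2 / π * (|z| / 2) = |z| / π := by ring
  rw [h4] at h1
  have hs : 0 < Real.sin (|z| / 2) := lt_of_lt_of_le (by positivity) h1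
  rw [Real.cot_eq_cos_div_sin, abs_div, h2, div_mul_eq_mul_div, div_le_iff₀ hs]
  have h5 := Real.abs_cos_le_one (z / 2)
  rw [div_le_iff₀ Real.pi_pos] at h1
  nlinarith

lemma pd_lip (f : ℝ → ℝ) (hf : Function.Periodic f (2 * π)) (hc : ContDiff ℝ 1 f) :
    ∃ C, 0 ≤ C ∧ ∀ a b, |f a - f b| ≤ C * |a - b| := by
  have hb := (pd_deriv_periodic f hf).isBounded_of_continuous (by positivity)
    (hc.continuous_deriv le_rfl)
  obtain ⟨C, hC⟩ := hb.exists_norm_le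
  have hC' : ∀ x, ‖deriv f x‖ ≤ C := fun x => hC _ ⟨x, rfl⟩
  refine ⟨C, (norm_nonneg _).trans (hC' 0), fun a b => ?_⟩
  exact Convex.norm_image_sub_le_of_norm_deriv_le (s := Set.univ)
    (fun x _ => (hc.differentiable one_ne_zero) x) (fun x _ => hC' x) convex_univ
    (Set.mem_univ b) (Set.mem_univ a)

lemma pd_integrand_bound (f : ℝ → ℝ) (hf : Function.Periodic f (2 * π)) (hc : ContDiff ℝ 1 f) :
    ∃ K, ∀ x z, |z| ≤ π → ‖Real.cot (z / 2) * (f (x - z) - f x)‖ ≤ K := by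
  obtain ⟨C, hC0, hC⟩ := pd_lip f hf hc
  refine ⟨π * C, fun x z hz => ?_⟩
  have h1 := pd_cot_bound z hz
  have h2 := hC (x - z) x
  have h3 : |x - z - x| = |z| := by rw [sub_sub_cancel_left, abs_neg]
  rw [h3] at h2
  rw [Real.norm_eq_abs, abs_mul]
  calc |Real.cot (z / 2)| * |f (x - z) - f x| ≤ |Real.cot (z / 2)| * (C * |z|) := by gcongr
    _ = (|Real.cot (z / 2)| * |z|) * C := by ring
    _ ≤ π * C := by gcongr

lemma pd_meas (f : ℝ → ℝ) (hc : Continuous f) (x : ℝ) :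
    Measurable (fun z => Real.cot (z / 2) * (f (x - z) - f x)) := by
  simp only [Real.cot_eq_cos_div_sin]
  have := hc.measurable
  fun_prop

lemma pd_abs_le (z : ℝ) (hz : z ∈ Set.uIoc (-π) π) : |z| ≤ π := by
  rw [Set.uIoc_of_le (by linarith [Real.pi_pos])] at hz
  exact abs_le.mpr ⟨hz.1.le, hz.2⟩

lemma pd_hasDerivAt (f : ℝ → ℝ) (hf : Function.Periodic f (2 * π)) (hc : ContDiff ℝ 2 f) (x : ℝ) :
    HasDerivAt (periodicHilbert f) (periodicHilbert (deriv f) x) x := by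
  have hf' := pd_deriv_periodic f hf
  have hc1 : ContDiff ℝ 1 f := hc.of_le (by norm_num)
  have hc' : ContDiff ℝ 1 (deriv f) := by
    have : ContDiff ℝ (1 + 1) f := by simpa [one_add_one_eq_two] using hc
    exact (contDiff_succ_iff_deriv.mp this).2.2
  have he : periodicHilbert f = fun x =>
      (1 / (2 * π)) * ∫ z in (-π)..π, Real.cot (z / 2) * (f (x - z) - f x) :=
    funext fun x => pd_hilbert_eq f hf x
  rw [he, pd_hilbert_eq _ hf']
  refine HasDerivAt.const_mul _ ?_
  obtain ⟨K, hK⟩ := pd_integrand_bound f hf hc1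
  obtain ⟨K', hK'⟩ := pd_integrand_bound _ hf' hc'
  refine (intervalIntegral.hasDerivAt_integral_of_dominated_loc_of_deriv_le
    (F := fun x z => Real.cot (z / 2) * (f (x - z) - f x))
    (F' := fun x z => Real.cot (z / 2) * (deriv f (x - z) - deriv f x))
    (bound := fun _ => K') (s := Set.univ) Filter.univ_mem
    (Filter.Eventually.of_forall fun y => (pd_meas f hc.continuous y).aestronglyMeasurable)
    ?_ (pd_meas _ hc'.continuous x).aestronglyMeasurable ?_ ?_ ?_).2
  · refine (intervalIntegrable_const (c := K)).mono_fun
      (pd_meas f hc.continuous x).aestronglyMeasurable ?_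
    refine (ae_restrict_iff' measurableSet_uIoc).mpr (Filter.Eventually.of_forall fun z hz => ?_)
    exact (hK x z (pd_abs_le z hz)).trans (le_abs_self K)
  · exact Filter.Eventually.of_forall fun z hz y _ => hK' y z (pd_abs_le z hz)
  · exact intervalIntegrable_const
  · refine Filter.Eventually.of_forall fun z hz y _ => ?_
    have hd : Differentiable ℝ f := hc1.differentiable one_ne_zero
    have h1 : HasDerivAt (fun y => f (y - z)) (deriv f (y - z)) y :=
      HasDerivAt.comp_sub_const y z (hd (y - z)).hasDerivAt
    exact (h1.sub (hd y).hasDerivAt).const_mul _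

/-- Entropy dissipation identity for the periodic Dyson equation:
`d/dt ∫_𝕋 u log u dx + ∫_𝕋 u · H[∂ₓu] dx = 0`. -/
theorem entropy_dissipation_periodic_dyson (u : ℝ → ℝ → ℝ)
    (hu : IsPeriodicDysonSolution u) (t : ℝ) (ht : 0 < t) :
    ∃ D : ℝ,
      HasDerivAt (fun s => ∫ x in (0 : ℝ)..(2 * π), u s x * Real.log (u s x)) D t ∧
      D + (∫ x in (0 : ℝ)..(2 * π), u t x * periodicHilbert (deriv (u t)) x) = 0 := by
  set U : ℝ × ℝ → ℝ := fun p => u p.1 p.2 with hU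
  have hopen : IsOpen (Set.Ioi (0:ℝ) ×ˢ (Set.univ : Set ℝ)) := isOpen_Ioi.prod isOpen_univ
  have hdiff : ∀ s, 0 < s → ∀ x, HasFDerivAt U (fderiv ℝ U (s, x)) (s, x) := fun s hs x =>
    ((hu.smooth.contDiffAt (hopen.mem_nhds (Set.mk_mem_prod hs (Set.mem_univ _)))).differentiableAt
      (by simp)).hasFDerivAt
  have hUc : ContinuousOn U (Set.Ioi (0:ℝ) ×ˢ (Set.univ : Set ℝ)) := hu.smooth.continuousOn
  have hdc : ContinuousOn (fun p => fderiv ℝ U p (1, 0)) (Set.Ioi (0:ℝ) ×ˢ (Set.univ : Set ℝ)) :=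
    (hu.smooth.continuousOn_fderiv_of_isOpen hopen (by simp)).clm_apply continuousOn_const
  have hut : ∀ s, 0 < s → ∀ x, HasDerivAt (fun r => u r x) (fderiv ℝ U (s, x) (1, 0)) s := by
    intro s hs x
    exact (hdiff s hs x).comp_hasDerivAt s ((hasDerivAt_id s).prodMk (hasDerivAt_const s x))
  have hpos : ∀ p ∈ (Set.Ioi (0:ℝ) ×ˢ (Set.univ : Set ℝ)), U p ≠ 0 := fun p hp =>
    (hu.pos p.1 hp.1 p.2).ne'
  set G : ℝ × ℝ → ℝ := fun p => fderiv ℝ U p (1, 0) * (Real.log (U p) + 1) with hG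
  have hGc : ContinuousOn G (Set.Ioi (0:ℝ) ×ˢ (Set.univ : Set ℝ)) :=
    hdc.mul ((hUc.log hpos).add continuousOn_const)
  have hslice : ∀ s, 0 < s → Continuous (fun x : ℝ => (s, x)) ∧
      ∀ x : ℝ, (s, x) ∈ (Set.Ioi (0:ℝ) ×ˢ (Set.univ : Set ℝ)) := fun s hs =>
    ⟨by fun_prop, fun x => ⟨hs, Set.mem_univ _⟩⟩
  have hFc : ∀ s, 0 < s → Continuous (fun x => u s x * Real.log (u s x)) := fun s hs =>
    (hUc.mul (hUc.log hpos)).comp_continuous (hslice s hs).1 (hslice s hs).2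
  have hGs : ∀ s, 0 < s → Continuous (fun x => G (s, x)) := fun s hs =>
    hGc.comp_continuous (hslice s hs).1 (hslice s hs).2
  obtain ⟨K, hK⟩ := (isCompact_Icc (a := t / 2) (b := 2 * t)).prod
    (isCompact_Icc (a := (0:ℝ)) (b := 2 * π)) |>.exists_bound_of_continuousOn
    (hGc.mono (fun p hp => ⟨lt_of_lt_of_le (half_pos ht) hp.1.1, Set.mem_univ _⟩))
  have hnhds : Set.Icc (t / 2) (2 * t) ∈ nhds t := Icc_mem_nhds (by linarith) (by linarith)
  have hD := (intervalIntegral.hasDerivAt_integral_of_dominated_loc_of_deriv_le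
    (μ := volume) (a := 0) (b := 2 * π)
    (F := fun s x => u s x * Real.log (u s x)) (F' := fun s x => G (s, x)) (x₀ := t)
    (bound := fun _ => K) hnhds
    (by filter_upwards [hnhds] with s hs
        exact (hFc s (lt_of_lt_of_le (half_pos ht) hs.1)).aestronglyMeasurable)
    ((hFc t ht).intervalIntegrable _ _) (hGs t ht).aestronglyMeasurable
    (Filter.Eventually.of_forall fun x hx s hs => by
      rw [Set.uIoc_of_le (by positivity)] at hx
      exact hK (s, x) ⟨hs, hx.1.le, hx.2⟩)
    intervalIntegrable_const
    (Filter.Eventually.of_forall fun x hx s hs => by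
      have hs0 : 0 < s := lt_of_lt_of_le (half_pos ht) hs.1
      have h1 := hut s hs0 x
      have h2 := hu.pos s hs0 x
      have h3 := h1.mul (h1.log h2.ne')
      refine h3.congr_deriv ?_
      change _ = fderiv ℝ U (s, x) (1, 0) * (Real.log (u s x) + 1)
      field_simp)).2
  refine ⟨_, hD, ?_⟩
  have hper : Function.Periodic (u t) (2 * π) := hu.periodic t
  have hsm : ContDiff ℝ (⊤ : ℕ∞) (u t) := by
    have : ContDiffOn ℝ (⊤ : ℕ∞) (U ∘ fun x : ℝ => (t, x)) Set.univ :=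
      hu.smooth.comp (by fun_prop) (fun x _ => (hslice t ht).2 x)
    exact contDiffOn_univ.mp this
  have hsm' : ContDiff ℝ (⊤ : ℕ∞) (deriv (u t)) := (contDiff_infty_iff_deriv.mp hsm).2
  have hle : (2 : WithTop ℕ∞) ≤ ((⊤ : ℕ∞) : WithTop ℕ∞) := by
    exact WithTop.coe_le_coe.mpr (le_top : (2 : ℕ∞) ≤ ⊤)
  have hH : ∀ x, HasDerivAt (periodicHilbert (u t)) (periodicHilbert (deriv (u t)) x) x :=
    pd_hasDerivAt _ hper (hsm.of_le hle)
  have hH' := pd_hasDerivAt _ (pd_deriv_periodic _ hper) (hsm'.of_le hle)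
  have hHc' : Continuous (periodicHilbert (deriv (u t))) :=
    continuous_iff_continuousAt.mpr fun x => (hH' x).continuousAt
  have hux : ∀ x, HasDerivAt (u t) (deriv (u t) x) x := fun x =>
    (hsm.differentiable (by simp) x).hasDerivAt
  have hprod : ∀ x, HasDerivAt (fun y => u t y * periodicHilbert (u t) y)
      (deriv (u t) x * periodicHilbert (u t) x + u t x * periodicHilbert (deriv (u t)) x) x :=
    fun x => (hux x).mul (hH x)
  have hpde : ∀ x, fderiv ℝ U (t, x) (1, 0) = -(deriv (u t) x * periodicHilbert (u t) x
      + u t x * periodicHilbert (deriv (u t)) x) := by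
    intro x
    have := hu.pde t ht x
    rw [(hut t ht x).deriv, (hprod x).deriv] at this
    linarith
  have hc2 : Continuous (fun x => u t x * periodicHilbert (deriv (u t)) x) :=
    hsm.continuous.mul hHc'
  rw [← intervalIntegral.integral_add ((hGs t ht).intervalIntegrable _ _)
    (hc2.intervalIntegrable _ _)]
  have hW : ∀ x, HasDerivAt
      (fun y => -((u t y * periodicHilbert (u t) y) * Real.log (u t y)))
      (G (t, x) + u t x * periodicHilbert (deriv (u t)) x) x := by
    intro x
    have h2 := hu.pos t ht x
    refine ((hprod x).mul ((hux x).log h2.ne')).neg.congr_deriv ?_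
    change _ = fderiv ℝ U (t, x) (1, 0) * (Real.log (u t x) + 1) + _
    rw [hpde x]
    field_simp
    ring
  rw [intervalIntegral.integral_eq_sub_of_hasDerivAt (fun x _ => hW x)
    (((hGs t ht).add hc2).intervalIntegrable _ _)]
  have e1 : u t (2 * π) = u t 0 := by simpa using hper 0
  have e2 : periodicHilbert (u t) (2 * π) = periodicHilbert (u t) 0 := by
    simpa using pd_hilbert_periodic _ hper 0
  rw [e1, e2, sub_self]
end
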